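/- arXiv:1905.12347 — 4 statements merged into one kernel-verified Lean document; each statement's English description precedes it below -/
import Mathlib

section
/- Let D ∈ R^{d×N} be a dictionary with unit-norm columns d_1,…,d_N and coherence μ, let x ∈ R^N be m-sparse with support Ω and x_min = min_{i∈Ω}|x_i|, and let y = Dx + σw where w ~ N(0, I_d) and σ > 0. Suppose μ < 1/(2m−1), that m ≤ N^β for some 0 < β < 1, and that for some α ≥ 0, x_min ≥ (σ/(1−(2m−1)μ))·(1+√β)·√(2(1+α)log N). Then OMP run for m iterations returns the estimated support Λ̂_m = Ω with probability at least 1 − (1/√(π(1+α)log N))·(N^{−α} + N^{−αβ}/√β). -/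
open MeasureTheory ProbabilityTheory Real

noncomputable section

/-- Euclidean dot product on `ℝ^n`. -/
def dot {n : ℕ} (u v : Fin n → ℝ) : ℝ := ∑ i, u i * v i

/-- Coherence of a dictionary, given by its columns: `max_{i ≠ j} |⟨d_i, d_j⟩|`. -/
def coherence {d N : ℕ} (D : Fin N → Fin d → ℝ) : ℝ :=
  sSup {x : ℝ | ∃ i j : Fin N, i ≠ j ∧ x = |dot (D i) (D j)|}

/-- Standard Gaussian measure `N(0, I_d)` on `ℝ^d`. -/
def stdGaussian (d : ℕ) : Measure (Fin d → ℝ) :=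
  Measure.pi fun _ => gaussianReal 0 1

/-- The ompResidual `y - D z`. -/
def ompResidual {d N : ℕ} (D : Fin N → Fin d → ℝ) (y : Fin d → ℝ) (z : Fin N → ℝ) :
    Fin d → ℝ :=
  y - ∑ l, z l • D l

/-- A run of `T` iterations of Orthogonal Matching Pursuit on the signal `y` with
dictionary `D`: `Λ t` is the estimated support and `z t` the estimated coefficient
vector after `t` iterations.  At each iteration an atom maximizing the absolute
correlation with the current ompResidual is added to the support, and the new estimate
is a least-squares minimizer among vectors supported on the current support. -/
def IsOMPRun {d N : ℕ} (D : Fin N → Fin d → ℝ) (y : Fin d → ℝ) (T : ℕ)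
    (Λ : ℕ → Finset (Fin N)) (z : ℕ → Fin N → ℝ) : Prop :=
  Λ 0 = ∅ ∧ z 0 = 0 ∧
  ∀ t : ℕ, t < T →
    (∃ j : Fin N,
      (∀ i : Fin N, |dot (D i) (ompResidual D y (z t))| ≤ |dot (D j) (ompResidual D y (z t))|) ∧
      Λ (t + 1) = insert j (Λ t)) ∧
    (∀ i, i ∉ Λ (t + 1) → z (t + 1) i = 0) ∧
    (∀ u : Fin N → ℝ, (∀ i, i ∉ Λ (t + 1) → u i = 0) →
      Real.sqrt (dot (ompResidual D y (z (t + 1))) (ompResidual D y (z (t + 1)))) ≤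
        Real.sqrt (dot (ompResidual D y u) (ompResidual D y u)))

/-!
Let `r` be a residual whose remaining coefficients `e` are supported on `Ω`, and let
`E = max |e i|`.  Incoherence bounds the correlation of `r` with an atom outside `Ω` by `|Ω| E μ`
plus noise, while the atom carrying `E` has correlation at least `(1 - (|Ω| - 1) μ) E` minus noise.
Hence OMP selects an atom of `Ω` as long as the noise correlations on `Ω` and off `Ω` sum to less
than `(1 - (2|Ω| - 1) μ) E`.  By least squares the residual is orthogonal to the atoms already
selected, so every step selects a new one and `Ω` is exhausted after `|Ω|` steps.

Each noise correlation is a standard Gaussian.  Only `|Ω| ≤ N ^ β` of them have to stay below the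
lower threshold `√β τ`, where `τ = √(2 (1 + α) log N)`, while all `N` have to stay below `τ`; the
Mills ratio bound and a union bound give the failure probability.
-/

lemma dot_eq_dotProduct {n : ℕ} (u v : Fin n → ℝ) : dot u v = u ⬝ᵥ v := rfl

section Coherence

variable {d N : ℕ} {D : Fin N → Fin d → ℝ}

lemma coherence_nonneg : 0 ≤ coherence D := by
  refine Real.sSup_nonneg ?_
  rintro _ ⟨i, j, -, rfl⟩
  exact abs_nonneg _

lemma abs_dot_le_coherence {i j : Fin N} (hij : i ≠ j) : |dot (D i) (D j)| ≤ coherence D := by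
  refine le_csSup (Set.Finite.bddAbove ?_) ⟨i, j, hij, rfl⟩
  refine (Set.finite_range fun p : Fin N × Fin N ↦ |dot (D p.1) (D p.2)|).subset ?_
  rintro _ ⟨i, j, -, rfl⟩
  exact ⟨(i, j), rfl⟩

lemma abs_dot_sum_smul_le_of_notMem {S : Finset (Fin N)} {e : Fin N → ℝ} {E : ℝ}
    (hE : ∀ l ∈ S, |e l| ≤ E) {i : Fin N} (hi : i ∉ S) :
    |dot (D i) (∑ l ∈ S, e l • D l)| ≤ S.card * (E * coherence D) := by
  calc |dot (D i) (∑ l ∈ S, e l • D l)|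
      = |∑ l ∈ S, e l * dot (D i) (D l)| := by
        simp only [dot_eq_dotProduct, dotProduct_sum, dotProduct_smul, smul_eq_mul]
    _ ≤ ∑ l ∈ S, |e l * dot (D i) (D l)| := Finset.abs_sum_le_sum_abs _ _
    _ ≤ ∑ _l ∈ S, E * coherence D := by
        refine Finset.sum_le_sum fun l hl ↦ ?_
        rw [abs_mul]
        exact mul_le_mul (hE l hl) (abs_dot_le_coherence (ne_of_mem_of_not_mem hl hi).symm)
          (abs_nonneg _) ((abs_nonneg _).trans (hE l hl))
    _ = S.card * (E * coherence D) := by rw [Finset.sum_const, nsmul_eq_mul]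

lemma sub_le_abs_dot_sum_smul_of_mem {S : Finset (Fin N)} {e : Fin N → ℝ} {E : ℝ}
    (hE : ∀ l ∈ S, |e l| ≤ E) {k : Fin N} (hk : k ∈ S) (hunit : dot (D k) (D k) = 1) :
    |e k| - (S.card - 1) * (E * coherence D) ≤ |dot (D k) (∑ l ∈ S, e l • D l)| := by
  have hsplit : dot (D k) (∑ l ∈ S, e l • D l)
      = e k + dot (D k) (∑ l ∈ S.erase k, e l • D l) := by
    rw [← Finset.add_sum_erase _ _ hk]
    simp only [dot_eq_dotProduct, dotProduct_add, dotProduct_smul, smul_eq_mul] at hunit ⊢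
    rw [hunit, mul_one]
  have hrest := abs_dot_sum_smul_le_of_notMem (D := D)
    (fun l hl ↦ hE l (Finset.mem_of_mem_erase hl)) (Finset.notMem_erase k S)
  rw [Finset.cast_card_erase_of_mem hk] at hrest
  rw [hsplit]
  linarith [abs_sub_abs_le_abs_add (e k) (dot (D k) (∑ l ∈ S.erase k, e l • D l))]

end Coherence

section Selection

variable {d N : ℕ} {D : Fin N → Fin d → ℝ} {Ω : Finset (Fin N)} {n : Fin d → ℝ} {a b : ℝ}

lemma mem_and_dot_ne_zero_of_forall_abs_dot_le (hunit : ∀ i ∈ Ω, dot (D i) (D i) = 1)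
    (hb : 0 ≤ b) (hin : ∀ i ∈ Ω, |dot (D i) n| < a) (hout : ∀ i ∉ Ω, |dot (D i) n| < b)
    {e : Fin N → ℝ} {i₀ : Fin N} (hi₀ : i₀ ∈ Ω)
    (hsnr : a + b ≤ (1 - (2 * (Ω.card : ℝ) - 1) * coherence D) * |e i₀|) {j : Fin N}
    (hj : ∀ i, |dot (D i) ((∑ l ∈ Ω, e l • D l) + n)| ≤
      |dot (D j) ((∑ l ∈ Ω, e l • D l) + n)|) :
    j ∈ Ω ∧ dot (D j) ((∑ l ∈ Ω, e l • D l) + n) ≠ 0 := by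
  obtain ⟨k, hk, hmax⟩ := Finset.exists_max_image Ω (fun i ↦ |e i|) ⟨i₀, hi₀⟩
  have hdot_add (i : Fin N) : dot (D i) ((∑ l ∈ Ω, e l • D l) + n)
      = dot (D i) (∑ l ∈ Ω, e l • D l) + dot (D i) n := by
    simp only [dot_eq_dotProduct, dotProduct_add]
  have hmargin : 0 < 1 - (2 * (Ω.card : ℝ) - 1) * coherence D := by
    have ha : 0 < a := (abs_nonneg _).trans_lt (hin i₀ hi₀)
    exact pos_of_mul_pos_left ((add_pos_of_pos_of_nonneg ha hb).trans_le hsnr) (abs_nonneg _)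
  have hsnr_max : a + b ≤ (1 - (2 * (Ω.card : ℝ) - 1) * coherence D) * |e k| :=
    hsnr.trans (mul_le_mul_of_nonneg_left (hmax i₀ hi₀) hmargin.le)
  have hlarge : Ω.card * (|e k| * coherence D) + b <
      |dot (D j) ((∑ l ∈ Ω, e l • D l) + n)| := by
    refine lt_of_lt_of_le ?_ (hj k)
    rw [hdot_add]
    linarith [sub_le_abs_dot_sum_smul_of_mem hmax hk (hunit k hk), hin k hk,
      abs_sub_abs_le_abs_add (dot (D k) (∑ l ∈ Ω, e l • D l)) (dot (D k) n)]
  constructor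
  · by_contra hjΩ
    rw [hdot_add] at hlarge
    linarith [abs_dot_sum_smul_le_of_notMem (D := D) hmax hjΩ, hout j hjΩ,
      abs_add_le (dot (D j) (∑ l ∈ Ω, e l • D l)) (dot (D j) n)]
  · have hinterference : 0 ≤ Ω.card * (|e k| * coherence D) :=
      mul_nonneg (Nat.cast_nonneg _) (mul_nonneg (abs_nonneg _) coherence_nonneg)
    exact abs_pos.1 (by linarith)

end Selection

section Residual

variable {d N : ℕ} (D : Fin N → Fin d → ℝ)

lemma ompResidual_add_single (y : Fin d → ℝ) (z : Fin N → ℝ) (k : Fin N) (s : ℝ) :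
    ompResidual D y (z + Pi.single k s) = ompResidual D y z - s • D k := by
  simp [ompResidual, add_smul, Finset.sum_add_distrib, Pi.single_apply, ite_smul, sub_sub]

lemma ompResidual_add_of_support_subset {x z : Fin N → ℝ} {Ω : Finset (Fin N)}
    (hx : ∀ i ∉ Ω, x i = 0) (hz : ∀ i ∉ Ω, z i = 0) (n : Fin d → ℝ) :
    ompResidual D ((∑ l, x l • D l) + n) z = (∑ l ∈ Ω, (x - z) l • D l) + n := by
  have hsum : ∑ l ∈ Ω, (x - z) l • D l = ∑ l, (x - z) l • D l :=
    Finset.sum_subset (Finset.subset_univ _) fun l _ hl ↦ by simp [hx l hl, hz l hl]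
  rw [hsum]
  simp only [ompResidual, Pi.sub_apply, sub_smul, Finset.sum_sub_distrib]
  abel

lemma dot_eq_zero_of_forall_dot_self_le {a r : Fin d → ℝ}
    (hmin : ∀ s : ℝ, dot r r ≤ dot (r - s • a) (r - s • a)) : dot a r = 0 := by
  have hquad (s : ℝ) : 0 ≤ dot a a * (s * s) + -2 * dot a r * s + 0 := by
    have hs := hmin s
    simp only [dot_eq_dotProduct, sub_dotProduct, dotProduct_sub, smul_dotProduct,
      dotProduct_smul, smul_eq_mul, dotProduct_comm r a] at hs ⊢
    linarith
  have hdiscrim := discrim_le_zero hquad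
  simp only [discrim] at hdiscrim
  exact pow_eq_zero_iff two_ne_zero |>.1 (le_antisymm (by linarith) (sq_nonneg _))

end Residual

namespace IsOMPRun

variable {d N T : ℕ} {D : Fin N → Fin d → ℝ} {y : Fin d → ℝ} {Λ : ℕ → Finset (Fin N)}
  {z : ℕ → Fin N → ℝ}

lemma coeff_eq_zero (hrun : IsOMPRun D y T Λ z) {t : ℕ} (ht : t ≤ T) {i : Fin N}
    (hi : i ∉ Λ t) : z t i = 0 := by
  cases t with
  | zero => simp [hrun.2.1]
  | succ t => exact (hrun.2.2 t ht).2.1 i hi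

lemma dot_residual_eq_zero (hrun : IsOMPRun D y T Λ z) {t : ℕ} (ht : t ≤ T) {k : Fin N}
    (hk : k ∈ Λ t) : dot (D k) (ompResidual D y (z t)) = 0 := by
  cases t with
  | zero => simp [hrun.1] at hk
  | succ t =>
    refine dot_eq_zero_of_forall_dot_self_le fun s ↦ ?_
    rw [← ompResidual_add_single]
    refine (Real.sqrt_le_sqrt_iff (Finset.sum_nonneg fun i _ ↦ mul_self_nonneg _)).1 ?_
    refine (hrun.2.2 t ht).2.2 _ fun i hi ↦ ?_
    simp [hrun.coeff_eq_zero ht hi, (ne_of_mem_of_not_mem hk hi).symm]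

lemma support_eq_of_subsingleton [Subsingleton (Fin N)] {Ω : Finset (Fin N)}
    (hrun : IsOMPRun D y Ω.card Λ z) : Λ Ω.card = Ω := by
  rcases Ω.eq_empty_or_nonempty with rfl | hΩ
  · simpa using hrun.1
  · obtain ⟨t, ht⟩ := Nat.exists_eq_succ_of_ne_zero hΩ.card_pos.ne'
    obtain ⟨⟨j, -, hj⟩, -⟩ := hrun.2.2 t (by lia)
    have hΛ : (Λ Ω.card).Nonempty := ⟨j, by simp [ht, hj]⟩
    rw [Finset.Nonempty.eq_univ hΛ, Finset.Nonempty.eq_univ hΩ]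

variable {x : Fin N → ℝ} {Ω : Finset (Fin N)} {n : Fin d → ℝ} {a b : ℝ}

lemma subset_and_card_eq (hunit : ∀ i ∈ Ω, dot (D i) (D i) = 1) (hx : ∀ i ∉ Ω, x i = 0)
    (hb : 0 ≤ b) (hin : ∀ i ∈ Ω, |dot (D i) n| < a) (hout : ∀ i ∉ Ω, |dot (D i) n| < b)
    (hsnr : ∀ i ∈ Ω, a + b ≤ (1 - (2 * (Ω.card : ℝ) - 1) * coherence D) * |x i|)
    (hrun : IsOMPRun D ((∑ l, x l • D l) + n) T Λ z) {t : ℕ} (htT : t ≤ T)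
    (htΩ : t ≤ Ω.card) : Λ t ⊆ Ω ∧ (Λ t).card = t := by
  induction t with
  | zero => simp [hrun.1]
  | succ t ih =>
    obtain ⟨hsub, hcard⟩ := ih (by lia) (by lia)
    obtain ⟨⟨j, hj, hinsert⟩, -⟩ := hrun.2.2 t htT
    have hz (i : Fin N) (hi : i ∉ Λ t) : z t i = 0 := hrun.coeff_eq_zero (by lia) hi
    obtain ⟨i₀, hi₀, hi₀Λ⟩ : ∃ i ∈ Ω, i ∉ Λ t := Finset.exists_mem_notMem_of_card_lt_card (by lia)
    have hresidual :=
      ompResidual_add_of_support_subset D hx (fun i hi ↦ hz i fun h ↦ hi (hsub h)) n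
    have hselect : j ∈ Ω ∧ dot (D j) (ompResidual D ((∑ l, x l • D l) + n) (z t)) ≠ 0 := by
      rw [hresidual] at hj ⊢
      exact mem_and_dot_ne_zero_of_forall_abs_dot_le hunit hb hin hout hi₀
        (by simpa [hz i₀ hi₀Λ] using hsnr i₀ hi₀) hj
    have hjΛ : j ∉ Λ t := fun h ↦ hselect.2 (hrun.dot_residual_eq_zero (by lia) h)
    rw [hinsert, Finset.card_insert_of_notMem hjΛ, hcard]
    exact ⟨Finset.insert_subset hselect.1 hsub, rfl⟩

lemma support_eq (hunit : ∀ i ∈ Ω, dot (D i) (D i) = 1) (hx : ∀ i ∉ Ω, x i = 0)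
    (hb : 0 ≤ b) (hin : ∀ i ∈ Ω, |dot (D i) n| < a) (hout : ∀ i ∉ Ω, |dot (D i) n| < b)
    (hsnr : ∀ i ∈ Ω, a + b ≤ (1 - (2 * (Ω.card : ℝ) - 1) * coherence D) * |x i|)
    (hrun : IsOMPRun D ((∑ l, x l • D l) + n) Ω.card Λ z) : Λ Ω.card = Ω := by
  obtain ⟨hsub, hcard⟩ := hrun.subset_and_card_eq hunit hx hb hin hout hsnr le_rfl le_rfl
  exact Finset.eq_of_subset_of_card_le hsub hcard.ge

end IsOMPRun

section GaussianTail

open scoped NNReal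

variable (m : ℝ) {v : ℝ≥0} {t : ℝ}

lemma hasDerivAt_gaussianPDFReal (v : ℝ≥0) (x : ℝ) :
    HasDerivAt (gaussianPDFReal m v) (-((x - m) / v) * gaussianPDFReal m v x) x := by
  have hexponent : HasDerivAt (fun x ↦ -(x - m) ^ 2 / (2 * v)) (-((x - m) / v)) x :=
    ((((hasDerivAt_id' x).sub_const m).pow 2).fun_neg.div_const (2 * (v : ℝ))).congr_deriv
      (by push_cast; ring)
  refine (hexponent.exp.const_mul (√(2 * π * v))⁻¹).congr_deriv ?_
  rw [gaussianPDFReal]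
  ring

lemma tendsto_gaussianPDFReal_atTop (hv : v ≠ 0) :
    Filter.Tendsto (gaussianPDFReal m v) Filter.atTop (nhds 0) := by
  have hsq : Filter.Tendsto (fun x : ℝ ↦ (x - m) ^ 2 / (2 * v)) Filter.atTop Filter.atTop :=
    ((Filter.tendsto_pow_atTop two_ne_zero).comp
      (Filter.tendsto_atTop_add_const_right _ (-m) Filter.tendsto_id)).atTop_div_const
      (by positivity)
  simpa [gaussianPDFReal_def, neg_div] using
    (Real.tendsto_exp_neg_atTop_nhds_zero.comp hsq).const_mul (√(2 * π * v))⁻¹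

/-- On `[m + t, ∞)` the density `p` satisfies `p x ≤ ((x - m) / t) p x`, and the right-hand side
is the derivative of `-(v / t) p`. -/
lemma gaussianReal_Ici_le (hv : v ≠ 0) (ht : 0 < t) :
    gaussianReal m v (Set.Ici (m + t)) ≤
      ENNReal.ofReal (v / t * gaussianPDFReal m v (m + t)) := by
  have hderiv (x : ℝ) (_ : x ∈ Set.Ici (m + t)) :
      HasDerivAt (fun x ↦ -(v / t * gaussianPDFReal m v x))
        ((x - m) / t * gaussianPDFReal m v x) x :=
    ((hasDerivAt_gaussianPDFReal m v x).const_mul (v / t : ℝ)).fun_neg.congr_deriv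
      (by field_simp)
  have hnonneg (x : ℝ) (hx : x ∈ Set.Ioi (m + t)) :
      0 ≤ (x - m) / t * gaussianPDFReal m v x :=
    mul_nonneg (div_nonneg (by linarith [Set.mem_Ioi.1 hx]) ht.le) (gaussianPDFReal_nonneg m v x)
  have hlim : Filter.Tendsto (fun x ↦ -(v / t * gaussianPDFReal m v x)) Filter.atTop (nhds 0) := by
    simpa using ((tendsto_gaussianPDFReal_atTop m hv).const_mul (v / t : ℝ)).neg
  rw [gaussianReal_apply_eq_integral m hv, integral_Ici_eq_integral_Ioi]
  refine ENNReal.ofReal_le_ofReal ?_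
  calc ∫ x in Set.Ioi (m + t), gaussianPDFReal m v x
      ≤ ∫ x in Set.Ioi (m + t), (x - m) / t * gaussianPDFReal m v x := by
        refine setIntegral_mono_on (integrable_gaussianPDFReal m v).integrableOn
          (integrableOn_Ioi_deriv_of_nonneg' hderiv hnonneg hlim) measurableSet_Ioi fun x hx ↦ ?_
        refine le_mul_of_one_le_left (gaussianPDFReal_nonneg m v x) ?_
        rw [one_le_div ht]
        linarith [Set.mem_Ioi.1 hx]
    _ = v / t * gaussianPDFReal m v (m + t) := by
        rw [integral_Ioi_of_hasDerivAt_of_nonneg' hderiv hnonneg hlim]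
        ring

lemma gaussianReal_Iic_sub_eq_Ici_add (v : ℝ≥0) (t : ℝ) :
    gaussianReal m v (Set.Iic (m - t)) = gaussianReal m v (Set.Ici (m + t)) := by
  have hreflect : (gaussianReal m v).map (fun x ↦ 2 * m - x) = gaussianReal m v := by
    rw [gaussianReal_map_const_sub]
    congr 1
    ring
  rw [← hreflect, Measure.map_apply (by fun_prop) measurableSet_Ici, hreflect]
  congr 1
  ext x
  simp only [Set.mem_Iic, Set.mem_preimage, Set.mem_Ici]
  constructor <;> intro h <;> linarith

lemma gaussianReal_le_abs_sub_le (hv : v ≠ 0) (ht : 0 < t) :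
    gaussianReal m v {x | t ≤ |x - m|} ≤
      ENNReal.ofReal (2 * (v / t * gaussianPDFReal m v (m + t))) := by
  have hcover : {x | t ≤ |x - m|} ⊆ Set.Ici (m + t) ∪ Set.Iic (m - t) := by
    intro x hx
    rcases le_abs.1 (show t ≤ |x - m| from hx) with h | h
    · exact Or.inl (Set.mem_Ici.2 (by linarith))
    · exact Or.inr (Set.mem_Iic.2 (by linarith))
  calc gaussianReal m v {x | t ≤ |x - m|}
      ≤ gaussianReal m v (Set.Ici (m + t)) + gaussianReal m v (Set.Iic (m - t)) :=
        (measure_mono hcover).trans (measure_union_le _ _)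
    _ = 2 * gaussianReal m v (Set.Ici (m + t)) := by
        rw [gaussianReal_Iic_sub_eq_Ici_add, two_mul]
    _ ≤ 2 * ENNReal.ofReal (v / t * gaussianPDFReal m v (m + t)) := by
        gcongr
        exact gaussianReal_Ici_le m hv ht
    _ = ENNReal.ofReal (2 * (v / t * gaussianPDFReal m v (m + t))) := by
        rw [ENNReal.ofReal_mul zero_le_two, ENNReal.ofReal_ofNat]

end GaussianTail

section GaussianNoise

variable {d N : ℕ}

instance isProbabilityMeasure_stdGaussian : IsProbabilityMeasure (_root_.stdGaussian d) :=
  inferInstanceAs (IsProbabilityMeasure (Measure.pi fun _ ↦ gaussianReal 0 1))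

lemma stdGaussian_map_dot (a : Fin d → ℝ) :
    (_root_.stdGaussian d).map (dot a) = gaussianReal 0 (dot a a).toNNReal := by
  let L : StrongDual ℝ (EuclideanSpace ℝ (Fin d)) := innerSL ℝ (WithLp.toLp 2 a)
  have hdot : dot a = L ∘ WithLp.toLp 2 := by
    ext w
    simp [L, dot, PiLp.inner_apply, mul_comm]
  have hnorm : ‖L‖ ^ 2 = dot a a := by
    rw [innerSL_apply_norm, EuclideanSpace.real_norm_sq_eq]
    simp only [dot, sq]
  have hvar : ((dot a a).toNNReal : ℝ) = ‖L‖ ^ 2 := by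
    rw [← hnorm, Real.coe_toNNReal _ (sq_nonneg _)]
  refine Measure.ext_of_charFun (funext fun t ↦ ?_)
  rw [charFun_gaussianReal, hvar, hdot, ← Measure.map_map (by fun_prop) (by fun_prop),
    _root_.stdGaussian, map_pi_eq_stdGaussian, charFun_map_eq_charFunDual_smul,
    charFunDual_stdGaussian, norm_smul, ← Complex.ofReal_pow, mul_pow, Real.norm_eq_abs, sq_abs]
  congr 1
  push_cast
  ring

/-- The event that the noise has correlation at least `t` with some atom indexed by `S`. -/
def largeCorrelation (D : Fin N → Fin d → ℝ) (S : Finset (Fin N)) (t : ℝ) : Set (Fin d → ℝ) :=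
  ⋃ i ∈ S, {w | t ≤ |dot (D i) w|}

lemma stdGaussian_le_abs_dot_le {a : Fin d → ℝ} (ha : dot a a = 1) {t : ℝ} (ht : 0 < t) :
    _root_.stdGaussian d {w | t ≤ |dot a w|} ≤
      ENNReal.ofReal (2 * (1 / t * gaussianPDFReal 0 1 t)) := by
  have hdot : Measurable (dot a) := by unfold dot; fun_prop
  have htail := gaussianReal_le_abs_sub_le 0 one_ne_zero ht
  rw [← Real.toNNReal_one, ← ha, ← stdGaussian_map_dot, Measure.map_apply hdot
    (measurableSet_le measurable_const (by fun_prop))] at htail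
  simpa [ha] using htail

lemma stdGaussian_largeCorrelation_le {D : Fin N → Fin d → ℝ} {S : Finset (Fin N)}
    (hunit : ∀ i ∈ S, dot (D i) (D i) = 1) {t : ℝ} (ht : 0 < t) :
    _root_.stdGaussian d (largeCorrelation D S t) ≤
      ENNReal.ofReal (S.card * (2 * (1 / t * gaussianPDFReal 0 1 t))) := by
  calc _root_.stdGaussian d (largeCorrelation D S t)
      ≤ ∑ i ∈ S, _root_.stdGaussian d {w | t ≤ |dot (D i) w|} := measure_biUnion_finset_le _ _
    _ ≤ S.card • ENNReal.ofReal (2 * (1 / t * gaussianPDFReal 0 1 t)) :=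
        Finset.sum_le_card_nsmul _ _ _ fun i hi ↦ stdGaussian_le_abs_dot_le (hunit i hi) ht
    _ = ENNReal.ofReal (S.card * (2 * (1 / t * gaussianPDFReal 0 1 t))) := by
        rw [nsmul_eq_mul, ENNReal.ofReal_mul (Nat.cast_nonneg _), ENNReal.ofReal_natCast]

lemma rpow_mul_gaussianPDFReal_threshold {N α c : ℝ} (hN : 1 < N) (hα : -1 < α) (hc : 0 < c) :
    N ^ c * (2 * (1 / (√c * √(2 * (1 + α) * log N)) *
      gaussianPDFReal 0 1 (√c * √(2 * (1 + α) * log N)))) =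
    1 / √(π * (1 + α) * log N) * (1 / (N ^ (α * c) * √c)) := by
  have hN₀ : 0 < N := by linarith
  have hlog : 0 < (1 + α) * log N := mul_pos (by linarith) (log_pos hN)
  have hexp : exp (-(√c * √(2 * (1 + α) * log N)) ^ 2 / 2) = (N ^ c)⁻¹ * (N ^ (α * c))⁻¹ := by
    rw [mul_pow, sq_sqrt hc.le, sq_sqrt (by linarith), ← rpow_neg hN₀.le, ← rpow_neg hN₀.le,
      ← rpow_add hN₀, rpow_def_of_pos hN₀]
    congr 1
    ring
  have hNc : N ^ c ≠ 0 := (rpow_pos_of_pos hN₀ _).ne'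
  have hsqrt : √((1 + α) * log N) ≠ 0 := (sqrt_pos.2 hlog).ne'
  simp only [gaussianPDFReal, sub_zero, NNReal.coe_one, mul_one, hexp]
  rw [mul_assoc 2, mul_assoc π, sqrt_mul zero_le_two, sqrt_mul pi_pos.le, sqrt_mul zero_le_two]
  field_simp
  norm_num

lemma stdGaussian_largeCorrelation_threshold_le {D : Fin N → Fin d → ℝ} {S : Finset (Fin N)}
    {α c : ℝ} (hunit : ∀ i ∈ S, dot (D i) (D i) = 1) (hN : 1 < N) (hα : -1 < α) (hc : 0 < c)
    (hS : (S.card : ℝ) ≤ (N : ℝ) ^ c) :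
    _root_.stdGaussian d (largeCorrelation D S (√c * √(2 * (1 + α) * log N))) ≤
      ENNReal.ofReal (1 / √(π * (1 + α) * log N) * (1 / ((N : ℝ) ^ (α * c) * √c))) := by
  have hN' : (1 : ℝ) < N := by exact_mod_cast hN
  have hlog : 0 < 2 * (1 + α) * log N := mul_pos (by linarith) (log_pos hN')
  have ht : 0 < √c * √(2 * (1 + α) * log N) := mul_pos (sqrt_pos.2 hc) (sqrt_pos.2 hlog)
  rw [← rpow_mul_gaussianPDFReal_threshold hN' hα hc]
  refine (stdGaussian_largeCorrelation_le hunit ht).trans (ENNReal.ofReal_le_ofReal ?_)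
  exact mul_le_mul_of_nonneg_right hS
    (mul_nonneg zero_le_two (mul_nonneg (by positivity) (gaussianPDFReal_nonneg _ _ _)))

end GaussianNoise

section Recovery

lemma ofReal_one_sub_le_measure {Ω : Type*} [MeasurableSpace Ω] {P : Measure Ω}
    [IsProbabilityMeasure P] {s t : Set Ω} {p : ℝ} (hp : 0 ≤ p) (hst : sᶜ ⊆ t)
    (ht : P t ≤ ENNReal.ofReal p) : ENNReal.ofReal (1 - p) ≤ P s := by
  rw [ENNReal.ofReal_sub _ hp, ENNReal.ofReal_one, tsub_le_iff_right]
  calc 1 = P Set.univ := measure_univ.symm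
    _ ≤ P s + P sᶜ := measure_univ_le_add_compl s
    _ ≤ P s + ENNReal.ofReal p := by gcongr; exact (measure_mono hst).trans ht

variable {d N : ℕ} {D : Fin N → Fin d → ℝ} {x : Fin N → ℝ} {Ω : Finset (Fin N)}

lemma one_sub_mul_coherence_pos (hMIP : coherence D < 1 / (2 * (Ω.card : ℝ) - 1)) :
    0 < 1 - (2 * (Ω.card : ℝ) - 1) * coherence D := by
  have hcard : 0 < 2 * (Ω.card : ℝ) - 1 := one_div_pos.1 (coherence_nonneg.trans_lt hMIP)
  linarith [(lt_div_iff₀' hcard).1 hMIP]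

lemma IsOMPRun.support_eq_of_notMem_largeCorrelation {Λ : ℕ → Finset (Fin N)}
    {z : ℕ → Fin N → ℝ} {w : Fin d → ℝ} {σ s t : ℝ} (hunit : ∀ i ∈ Ω, dot (D i) (D i) = 1)
    (hx : ∀ i ∉ Ω, x i = 0) (hσ : 0 < σ) (ht : 0 ≤ t)
    (hMIP : coherence D < 1 / (2 * (Ω.card : ℝ) - 1))
    (hxmin : ∀ i ∈ Ω, σ / (1 - (2 * (Ω.card : ℝ) - 1) * coherence D) * (s + t) ≤ |x i|)
    (hΩ : w ∉ largeCorrelation D Ω s) (huniv : w ∉ largeCorrelation D Finset.univ t)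
    (hrun : IsOMPRun D ((∑ j, x j • D j) + σ • w) Ω.card Λ z) : Λ Ω.card = Ω := by
  simp only [largeCorrelation, Set.mem_iUnion, Set.mem_ofPred_eq, Finset.mem_univ, exists_prop,
    true_and, not_exists, not_and, not_le] at hΩ huniv
  have hscale (i : Fin N) : |dot (D i) (σ • w)| = σ * |dot (D i) w| := by
    rw [dot_eq_dotProduct, dotProduct_smul, smul_eq_mul, abs_mul, abs_of_pos hσ,
      dot_eq_dotProduct]
  refine hrun.support_eq hunit hx (a := σ * s) (mul_nonneg hσ.le ht) (fun i hi ↦ ?_)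
    (fun i _ ↦ ?_) fun i hi ↦ ?_
  · rw [hscale]
    exact mul_lt_mul_of_pos_left (hΩ i hi) hσ
  · rw [hscale]
    exact mul_lt_mul_of_pos_left (huniv i) hσ
  · rw [← mul_add, ← div_le_iff₀' (one_sub_mul_coherence_pos hMIP), mul_div_right_comm]
    exact hxmin i hi

end Recovery

theorem omp_exact_support_recovery_general
    (d N : ℕ) (D : Fin N → Fin d → ℝ) (hunit : ∀ i, dot (D i) (D i) = 1)
    (x : Fin N → ℝ) (Ω : Finset (Fin N)) (hx : ∀ i ∉ Ω, x i = 0)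
    (σ β α : ℝ) (hσ : 0 < σ) (hβ : 0 < β) (hα : -1 < α)
    (hMIP : coherence D < 1 / (2 * (Ω.card : ℝ) - 1))
    (hcard : (Ω.card : ℝ) ≤ (N : ℝ) ^ β)
    (hxmin : ∀ i ∈ Ω, σ / (1 - (2 * (Ω.card : ℝ) - 1) * coherence D) * (1 + √β) *
      √(2 * (1 + α) * log N) ≤ |x i|) :
    ENNReal.ofReal (1 - 1 / √(π * (1 + α) * log N) *
        (1 / (N : ℝ) ^ α + 1 / ((N : ℝ) ^ (α * β) * √β))) ≤
      stdGaussian d {w | ∀ (Λ : ℕ → Finset (Fin N)) (z : ℕ → Fin N → ℝ),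
        IsOMPRun D ((∑ j, x j • D j) + σ • w) Ω.card Λ z → Λ Ω.card = Ω} := by
  rcases le_or_gt N 1 with hN | hN
  · -- The claimed probability is `1` here: `log N = 0`, and division by `√0` gives `0`.
    have : Subsingleton (Fin N) := Fin.subsingleton_iff_le_one.2 hN
    refine ofReal_one_sub_le_measure (t := ∅) (by positivity) ?_ (by simp)
    exact fun w hw ↦ hw fun Λ z hrun ↦ hrun.support_eq_of_subsingleton
  refine ofReal_one_sub_le_measure (by positivity)
    (t := largeCorrelation D Finset.univ √(2 * (1 + α) * log N) ∪
      largeCorrelation D Ω (√β * √(2 * (1 + α) * log N))) ?_ ?_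
  · refine Set.compl_subset_comm.1 fun w hw Λ z hrun ↦ ?_
    rw [Set.mem_compl_iff, Set.mem_union, not_or] at hw
    refine hrun.support_eq_of_notMem_largeCorrelation (fun i _ ↦ hunit i) hx hσ
      (sqrt_nonneg _) hMIP (fun i hi ↦ ?_) hw.2 hw.1
    linarith [hxmin i hi]
  · have hΩ := stdGaussian_largeCorrelation_threshold_le (fun i _ ↦ hunit i) hN hα hβ hcard
    have huniv := stdGaussian_largeCorrelation_threshold_le (D := D) (S := Finset.univ)
      (fun i _ ↦ hunit i) hN hα one_pos (by simp)
    simp only [sqrt_one, one_mul, mul_one] at huniv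
    refine (measure_union_le _ _).trans ((add_le_add huniv hΩ).trans_eq ?_)
    rw [← ENNReal.ofReal_add (by positivity) (by positivity), ← mul_add]

/-- Theorem (sharper sufficient condition for OMP, fixed number of iterations):
under the MIP condition and the signal-to-noise condition
`x_min ≥ σ_eff (1 + √β) √(2(1+α) log N)`, OMP run for `m` iterations recovers the
support `Ω` of `x` with probability at least
`1 - (1/√(π(1+α) log N)) (N^{-α} + N^{-αβ}/√β)`. -/
theorem omp_exact_support_recovery
    (d N m : ℕ) (D : Fin N → Fin d → ℝ)
    (hunit : ∀ i, dot (D i) (D i) = 1)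
    (μ : ℝ) (hcoh : coherence D = μ)
    (x : Fin N → ℝ) (Ω : Finset (Fin N))
    (hsupp : ∀ i, i ∈ Ω ↔ x i ≠ 0) (hcard : Ω.card = m)
    (σ β α : ℝ) (hσ : 0 < σ) (hβ0 : 0 < β) (hβ1 : β < 1) (hα : 0 ≤ α)
    (hMIP : μ < 1 / (2 * (m : ℝ) - 1))
    (hmN : (m : ℝ) ≤ (N : ℝ) ^ β)
    (hxmin : ∀ i ∈ Ω,
      σ / (1 - (2 * (m : ℝ) - 1) * μ) * (1 + Real.sqrt β) *
        Real.sqrt (2 * (1 + α) * Real.log N) ≤ |x i|) :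
    ENNReal.ofReal
        (1 - 1 / Real.sqrt (π * (1 + α) * Real.log N) *
          (1 / (N : ℝ) ^ α + 1 / ((N : ℝ) ^ (α * β) * Real.sqrt β))) ≤
      stdGaussian d
        {w | ∀ (Λ : ℕ → Finset (Fin N)) (z : ℕ → Fin N → ℝ),
          IsOMPRun D ((∑ j, x j • D j) + σ • w) m Λ z → Λ m = Ω} := by
  subst hcoh hcard
  exact omp_exact_support_recovery_general d N D hunit x Ω
    (fun i hi ↦ not_not.1 (mt (hsupp i).2 hi)) σ β α hσ hβ0 (by linarith) hMIP hmN hxmin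

end
end

section
/- Let D ∈ R^{d×N} be a dictionary with unit-norm columns d_1,…,d_N and coherence μ, let z ∈ R^N be m-sparse with support Ω, and let r = Dz + σw for some σ > 0 and w ∈ R^d. Suppose μ < 1/(2m−1), m ≤ N^β for some 0 < β < 1, and, with τ = σ√(2(1+α)log N) for some α ≥ 0, the noise satisfies max_{k∈Ω}|⟨d_k, σw⟩| < √β·τ and max_{i∉Ω}|⟨d_i, σw⟩| < τ. If max_{i∈Ω}|z_i| ≥ (σ/(1−(2m−1)μ))·(1+√β)·√(2(1+α)log N), then max_{k∈Ω}|⟨d_k, r⟩| > max_{i∉Ω}|⟨d_i, r⟩|. -/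
open Real

noncomputable section

/-!
Let `k` be the index of a largest coefficient of the signal. At `k` the other support atoms
perturb the correlation `z k` by at most `(m - 1) μ |z k|`, while an atom outside the support has
correlation at most `m μ |z k|` with the signal. The remaining gap `(1 - (2m - 1) μ) |z k|` exceeds
the sum of the two noise contributions.
-/

section CrossCoherence

variable {R E ι : Type*} [SeminormedRing R] [AddCommMonoid E] [Module R E]
  {D : ι → E} {z : ι → R} {s : Finset ι}

lemma norm_apply_sum_smul_le (f : E →ₗ[R] R) {M μ : ℝ} (hz : ∀ l ∈ s, ‖z l‖ ≤ M)
    (hf : ∀ l ∈ s, ‖f (D l)‖ ≤ μ) :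
    ‖f (∑ l ∈ s, z l • D l)‖ ≤ s.card * (M * μ) := by
  rw [map_sum, ← nsmul_eq_mul, ← Finset.sum_const]
  refine norm_sum_le_of_le s fun l hl => ?_
  rw [map_smul, smul_eq_mul]
  exact norm_mul_le_of_le (hz l hl) (hf l hl)

lemma one_sub_mul_norm_le_norm_apply_sum_smul {f : E →ₗ[R] R} {μ : ℝ} {k : ι} (hk : k ∈ s)
    (hfk : f (D k) = 1) (hz : ∀ l ∈ s, ‖z l‖ ≤ ‖z k‖)
    (hf : ∀ l ∈ s, l ≠ k → ‖f (D l)‖ ≤ μ) :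
    (1 - (s.card - 1) * μ) * ‖z k‖ ≤ ‖f (∑ l ∈ s, z l • D l)‖ := by
  classical
  have hrest : ‖f (∑ l ∈ s.erase k, z l • D l)‖ ≤ (s.card - 1) * (‖z k‖ * μ) := by
    rw [← Finset.cast_card_erase_of_mem hk]
    exact norm_apply_sum_smul_le f (fun l hl => hz l (Finset.mem_of_mem_erase hl))
      fun l hl => hf l (Finset.mem_of_mem_erase hl) (Finset.ne_of_mem_erase hl)
  have hsplit : f (∑ l ∈ s, z l • D l) = z k + f (∑ l ∈ s.erase k, z l • D l) := by
    rw [← Finset.add_sum_erase s _ hk, map_add, map_smul, hfk, smul_eq_mul, mul_one]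
  calc (1 - (s.card - 1) * μ) * ‖z k‖ = ‖z k‖ - (s.card - 1) * (‖z k‖ * μ) := by ring
    _ ≤ ‖z k‖ - ‖f (∑ l ∈ s.erase k, z l • D l)‖ := by gcongr
    _ ≤ ‖f (∑ l ∈ s, z l • D l)‖ := hsplit ▸ norm_sub_le_norm_add _ _

/-- The functionals `φ i` form a sensing dictionary, which may differ from the synthesis dictionary
`D`; orthogonal matching pursuit is the case `φ i = ⟨D i, ·⟩`. -/
theorem omp_step_selects_support_atom_general {φ : ι → E →ₗ[R] R} {e : E} {μ a b : ℝ}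
    (hdiag : ∀ i, φ i (D i) = 1) (hμ : Pairwise fun i l => ‖φ i (D l)‖ ≤ μ)
    (hMIP : μ < 1 / (2 * (s.card : ℝ) - 1))
    (hin : ∀ k ∈ s, ‖φ k e‖ < a) (hout : ∀ i ∉ s, ‖φ i e‖ < b)
    (hz : ∃ i ∈ s, (a + b) / (1 - (2 * (s.card : ℝ) - 1) * μ) ≤ ‖z i‖) :
    ∃ k ∈ s, ∀ i ∉ s,
      ‖φ i ((∑ l ∈ s, z l • D l) + e)‖ < ‖φ k ((∑ l ∈ s, z l • D l) + e)‖ := by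
  obtain ⟨j, hj, hzj⟩ := hz
  obtain ⟨k, hk, hmax⟩ := s.exists_max_image (fun l => ‖z l‖) ⟨j, hj⟩
  refine ⟨k, hk, fun i hi => ?_⟩
  have hcard : (1 : ℝ) ≤ s.card := mod_cast Finset.card_pos.mpr ⟨j, hj⟩
  have hgap : 0 < 1 - (2 * (s.card : ℝ) - 1) * μ := by
    rw [lt_div_iff₀ (by linarith)] at hMIP
    linarith
  have hthreshold : a + b ≤ ‖z k‖ * (1 - (2 * (s.card : ℝ) - 1) * μ) :=
    (div_le_iff₀ hgap).mp (hzj.trans (hmax j hj))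
  set x := ∑ l ∈ s, z l • D l
  have hoff : ‖φ i x‖ ≤ s.card * (‖z k‖ * μ) :=
    norm_apply_sum_smul_le (φ i) hmax fun l hl => hμ (ne_of_mem_of_not_mem hl hi).symm
  have hon : (1 - (s.card - 1) * μ) * ‖z k‖ ≤ ‖φ k x‖ :=
    one_sub_mul_norm_le_norm_apply_sum_smul hk (hdiag k) hmax fun l _ hl => hμ hl.symm
  rw [map_add, map_add]
  calc ‖φ i x + φ i e‖ ≤ ‖φ i x‖ + ‖φ i e‖ := norm_add_le _ _
    _ < s.card * (‖z k‖ * μ) + b := add_lt_add_of_le_of_lt hoff (hout i hi)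
    _ ≤ (1 - (s.card - 1) * μ) * ‖z k‖ - a := by linarith
    _ < ‖φ k x‖ - ‖φ k e‖ := by linarith [hin k hk]
    _ ≤ ‖φ k x + φ k e‖ := norm_sub_le_norm_add _ _

end CrossCoherence

lemma pairwise_abs_dot_le_coherence {d N : ℕ} (D : Fin N → Fin d → ℝ) :
    Pairwise fun i j => |dot (D i) (D j)| ≤ coherence D := by
  intro i j hij
  refine le_csSup (Set.Finite.bddAbove ?_) ⟨i, j, hij, rfl⟩
  refine (Set.finite_range fun p : Fin N × Fin N => |dot (D p.1) (D p.2)|).subset ?_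
  rintro _ ⟨i, j, _, rfl⟩
  exact ⟨(i, j), rfl⟩

/-- Lemma (one OMP step selects a support atom): if the noise correlations are
bounded (`max_{k∈Ω} |⟨d_k, σw⟩| < √β τ` and `max_{i∉Ω} |⟨d_i, σw⟩| < τ` with
`τ = σ√(2(1+α) log N)`), MIP holds, `m ≤ N^β`, and
`max_{i∈Ω} |z_i| ≥ σ_eff (1+√β) √(2(1+α) log N)`, then for `r = Dz + σw`,
`max_{k∈Ω} |⟨d_k, r⟩| > max_{i∉Ω} |⟨d_i, r⟩|`. -/
theorem omp_step_selects_support_atom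
    (d N m : ℕ) (D : Fin N → Fin d → ℝ)
    (hunit : ∀ i, dot (D i) (D i) = 1)
    (μ : ℝ) (hcoh : coherence D = μ)
    (z : Fin N → ℝ) (Ω : Finset (Fin N))
    (hsupp : ∀ i, i ∈ Ω ↔ z i ≠ 0) (hcard : Ω.card = m)
    (σ β α : ℝ) (hσ : 0 < σ) (hβ0 : 0 < β) (hβ1 : β < 1) (hα : 0 ≤ α)
    (hMIP : μ < 1 / (2 * (m : ℝ) - 1))
    (hmN : (m : ℝ) ≤ (N : ℝ) ^ β)
    (w : Fin d → ℝ)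
    (hnoise_in : ∀ k ∈ Ω,
      |dot (D k) (σ • w)| < Real.sqrt β * (σ * Real.sqrt (2 * (1 + α) * Real.log N)))
    (hnoise_out : ∀ i ∉ Ω,
      |dot (D i) (σ • w)| < σ * Real.sqrt (2 * (1 + α) * Real.log N))
    (hzmax : ∃ i ∈ Ω,
      σ / (1 - (2 * (m : ℝ) - 1) * μ) * (1 + Real.sqrt β) *
        Real.sqrt (2 * (1 + α) * Real.log N) ≤ |z i|) :
    ∃ k ∈ Ω, ∀ i ∉ Ω,
      |dot (D i) ((∑ l, z l • D l) + σ • w)| <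
        |dot (D k) ((∑ l, z l • D l) + σ • w)| := by
  subst hcoh hcard
  rw [← Finset.sum_subset Ω.subset_univ fun l _ hl => by simp [not_not.1 (mt (hsupp l).2 hl)]]
  exact omp_step_selects_support_atom_general (φ := fun i => dotProductBilin ℝ ℝ (D i))
    hunit (pairwise_abs_dot_le_coherence D) hMIP hnoise_in hnoise_out
    (hzmax.imp fun i hi => ⟨hi.1, le_of_eq_of_le (by ring) hi.2⟩)

end
end

section
/- Let m > 1 be an integer, let 0 ≤ μ < 1/(m−1), and let V = [v_1 … v_m] ∈ R^{m×m} be an orthogonal matrix whose first column is v_1 = (1/√m)·1 (the normalized all-ones vector). Define Y ∈ R^{m×m} to be the matrix whose first row is √((1−(m−1)μ)/m)·1^T and whose k-th row, for k = 2,…,m, is √(1+μ)·v_k^T. Then the columns e_1,…,e_m of Y satisfy ⟨e_i, e_j⟩ = 1 if i = j and ⟨e_i, e_j⟩ = −μ if i ≠ j, for all i, j ∈ [m]. -/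
open Real

noncomputable section

/-!
Since `v₁` is a multiple of the all-ones vector, every row of `Y` is a multiple of the corresponding
`v_k`: the first by `√(1 - (m - 1) μ)`, all the others by `√(1 + μ)`. As the `v_k` are orthonormal,
`Yᵀ Y` therefore has eigenvalue `1 - (m - 1) μ` on `v₁` and `1 + μ` on its orthogonal complement,
that is, `Yᵀ Y = (1 + μ) I - m μ v₁ v₁ᵀ = (1 + μ) I - μ 1 1ᵀ`.
-/

open Matrix

section UpdateRow

variable {m n p R : Type*} [Fintype m] [DecidableEq m]

lemma transpose_updateRow_mul_updateRow [NonUnitalNonAssocRing R]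
    (A : Matrix m n R) (B : Matrix m p R) (o : m) (u : n → R) (v : p → R) :
    (A.updateRow o u)ᵀ * B.updateRow o v =
      Aᵀ * B - vecMulVec (A.row o) (B.row o) + vecMulVec u v := by
  ext i j
  have sum_off_o : ∑ k ∈ {o}ᶜ, A.updateRow o u k i * B.updateRow o v k j =
      ∑ k ∈ {o}ᶜ, A k i * B k j :=
    Finset.sum_congr rfl fun k hk ↦ by
      have hk : k ≠ o := by simpa using hk
      rw [updateRow_ne hk, updateRow_ne hk]
  simp only [mul_apply, Matrix.add_apply, Matrix.sub_apply, transpose_apply, vecMulVec_apply,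
    row_apply, Fintype.sum_eq_add_sum_compl o, sum_off_o, updateRow_self]
  abel

lemma transpose_mul_self_updateRow_smul_row [DecidableEq n] [CommRing R] {V : Matrix m n R}
    (hV : Vᵀ * V = 1) (o : m) (s t : R) :
    ((s • V).updateRow o (t • V.row o))ᵀ * (s • V).updateRow o (t • V.row o) =
      s ^ 2 • 1 + (t ^ 2 - s ^ 2) • vecMulVec (V.row o) (V.row o) := by
  rw [transpose_updateRow_mul_updateRow, transpose_smul, Matrix.smul_mul, Matrix.mul_smul, hV]
  ext i j
  simp only [Matrix.add_apply, Matrix.sub_apply, Matrix.smul_apply, vecMulVec_apply, row_apply,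
    Pi.smul_apply, smul_eq_mul]
  ring

end UpdateRow

section ExplicitConstruction

variable {ι : Type*} [Fintype ι] [DecidableEq ι] {o : ι} {μ : ℝ} {V : Matrix ι ι ℝ}

/-- The matrix `Y` of the explicit construction, indexed by an arbitrary finite type with `o` in the
role of the first index. The vector `v_k` is the row `V k`. -/
def explicitConstruction (o : ι) (μ : ℝ) (V : Matrix ι ι ℝ) : Matrix ι ι ℝ :=
  of fun k i ↦ if k = o then √((1 - ((Fintype.card ι : ℝ) - 1) * μ) / Fintype.card ι)
    else √(1 + μ) * V k i

lemma explicitConstruction_eq_updateRow (hμ : ((Fintype.card ι : ℝ) - 1) * μ ≤ 1)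
    (ho : V.row o = fun _ ↦ 1 / √(Fintype.card ι)) :
    explicitConstruction o μ V =
      (√(1 + μ) • V).updateRow o (√(1 - ((Fintype.card ι : ℝ) - 1) * μ) • V.row o) := by
  ext k i
  rw [updateRow_apply, explicitConstruction, of_apply, ho, sqrt_div (sub_nonneg.2 hμ)]
  simp [div_eq_mul_inv]

theorem gram_of_explicit_construction_general (hμ_ge : -1 ≤ μ)
    (hμ_le : ((Fintype.card ι : ℝ) - 1) * μ ≤ 1) (hV : V ∈ orthogonalGroup ι ℝ)
    (ho : V.row o = fun _ ↦ 1 / √(Fintype.card ι)) (i j : ι) :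
    ((explicitConstruction o μ V)ᵀ * explicitConstruction o μ V) i j =
      if i = j then 1 else -μ := by
  have card_ne_zero : (Fintype.card ι : ℝ) ≠ 0 :=
    Nat.cast_ne_zero.2 (Fintype.card_pos_iff.2 ⟨o⟩).ne'
  have sq_entry : 1 / √(Fintype.card ι) * (1 / √(Fintype.card ι)) = 1 / (Fintype.card ι : ℝ) := by
    rw [div_mul_div_comm, mul_self_sqrt (Nat.cast_nonneg _), one_mul]
  have sq_scale : √(1 + μ) ^ 2 = 1 + μ := sq_sqrt (by linarith)
  have sq_scale_first : √(1 - ((Fintype.card ι : ℝ) - 1) * μ) ^ 2 =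
      1 - ((Fintype.card ι : ℝ) - 1) * μ := sq_sqrt (sub_nonneg.2 hμ_le)
  rw [explicitConstruction_eq_updateRow hμ_le ho,
    transpose_mul_self_updateRow_smul_row ((mem_orthogonalGroup_iff' ι ℝ).1 hV), sq_scale,
    sq_scale_first]
  simp only [Matrix.add_apply, Matrix.smul_apply, vecMulVec_apply, one_apply, smul_eq_mul, ho,
    sq_entry]
  split_ifs <;> field_simp <;> ring

end ExplicitConstruction

lemma of_mem_orthogonalGroup_iff_dot {n : ℕ} {V : Fin n → Fin n → ℝ} :
    of V ∈ orthogonalGroup (Fin n) ℝ ↔ ∀ i j, dot (V i) (V j) = if i = j then 1 else 0 := by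
  rw [mem_orthogonalGroup_iff, ← Matrix.ext_iff]
  rfl

/-- Lemma (explicit construction): let `V = [v_1 … v_m]` be an orthogonal matrix
(columns `V j`, orthonormal) whose first column is the normalized all-ones vector,
and let `Y` be the matrix whose first row is `√((1-(m-1)μ)/m)·1ᵀ` and whose `k`-th
row (`k ≥ 2`) is `√(1+μ)·v_kᵀ`.  Then the columns `e_i = fun k => Y k i` of `Y`
satisfy `⟨e_i, e_j⟩ = 1` if `i = j` and `-μ` otherwise. -/
theorem gram_of_explicit_construction
    (m : ℕ) (hm : 1 < m) (μ : ℝ) (hμ0 : 0 ≤ μ) (hμ : μ < 1 / ((m : ℝ) - 1))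
    (V : Fin m → Fin m → ℝ)
    (horth : ∀ i j : Fin m, dot (V i) (V j) = if i = j then (1 : ℝ) else 0)
    (hfirst : V ⟨0, by omega⟩ = fun _ => 1 / Real.sqrt m) :
    ∀ i j : Fin m,
      dot
        (fun k : Fin m => if k = ⟨0, by omega⟩ then
            Real.sqrt ((1 - ((m : ℝ) - 1) * μ) / m)
          else Real.sqrt (1 + μ) * V k i)
        (fun k : Fin m => if k = ⟨0, by omega⟩ then
            Real.sqrt ((1 - ((m : ℝ) - 1) * μ) / m)
          else Real.sqrt (1 + μ) * V k j)
      = if i = j then (1 : ℝ) else -μ := by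
  have hμ_le : ((m : ℝ) - 1) * μ ≤ 1 :=
    ((lt_div_iff₀' (sub_pos.2 (Nat.one_lt_cast.2 hm))).1 hμ).le
  simpa [explicitConstruction, mul_apply, dot] using
    gram_of_explicit_construction_general (by linarith) (by simpa using hμ_le)
      (of_mem_orthogonalGroup_iff_dot.2 horth) (by rwa [Fintype.card_fin])

end
end

section
/- Let 0 < L < 1 and let m ≥ 1 be an integer with m ≤ (3 − L − √(8 − 8L))/L. Then 4L(2m−1−Lm) ≤ (1+L(m−1))², so the closed interval [(1+L(m−1))·(1 − √(1 − 4L(2m−1−Lm)/(1+L(m−1))²))/(2(2m−1−Lm)), (1+L(m−1))·(1 + √(1 − 4L(2m−1−Lm)/(1+L(m−1))²))/(2(2m−1−Lm))] is well defined and nonempty. Moreover, for every μ in this interval with 0 < μ < 1/(m−1), one has mμ²/(1−(m−1)μ) + (1 − mμ²/(1−(m−1)μ))·L ≤ μ, equivalently μ²(2m−1−Lm) − μ(1+L(m−1)) + L ≤ 0. -/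
open Real

/-!
Since `(1 + L(x - 1))² - 4L(2x - 1 - Lx) = (3 - L - Lx)² - (8 - 8L)`, the bound on `x` says exactly
that `3 - L - Lx` is at least `√(8 - 8L)`, so the quadratic `μ²(2x - 1 - Lx) - μ(1 + L(x - 1)) + L`
has a nonnegative discriminant. The interval is the one between its two roots, and the inequality
in `μ` becomes the quadratic one on multiplying by `1 - (x - 1)μ > 0`.
-/

section OrderedField

variable {K : Type*} [Field K] [LinearOrder K] [IsStrictOrderedRing K]

theorem quadratic_nonpos_iff_mem_Icc {a b c s : K} (ha : 0 < a) (hs : 0 ≤ s)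
    (h : discrim a b c = s ^ 2) (x : K) :
    a * x ^ 2 + b * x + c ≤ 0 ↔ x ∈ Set.Icc ((-b - s) / (2 * a)) ((-b + s) / (2 * a)) := by
  have h2a : 0 < 2 * a := by positivity
  have complete_square : 4 * a * (a * x ^ 2 + b * x + c) = (2 * a * x + b) ^ 2 - s ^ 2 := by
    rw [← h, discrim]
    ring
  calc a * x ^ 2 + b * x + c ≤ 0
      ↔ 4 * a * (a * x ^ 2 + b * x + c) ≤ 0 :=
        (smul_nonpos_iff_nonpos_of_pos_left (by positivity : 0 < 4 * a)).symm
    _ ↔ (2 * a * x + b) ^ 2 ≤ s ^ 2 := by rw [complete_square, sub_nonpos]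
    _ ↔ -s ≤ 2 * a * x + b ∧ 2 * a * x + b ≤ s := by rw [sq_le_sq, abs_of_nonneg hs, abs_le]
    _ ↔ x ∈ Set.Icc ((-b - s) / (2 * a)) ((-b + s) / (2 * a)) := by
      rw [Set.mem_Icc, div_le_iff₀' h2a, le_div_iff₀' h2a, sub_le_iff_le_add',
        neg_le_iff_add_nonneg]
      constructor <;> rintro ⟨hl, hu⟩ <;> constructor <;> linarith

theorem div_add_one_sub_div_mul_le_iff {L x μ : K} (hμ : μ * (x - 1) < 1) :
    x * μ ^ 2 / (1 - (x - 1) * μ) + (1 - x * μ ^ 2 / (1 - (x - 1) * μ)) * L ≤ μ ↔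
      μ ^ 2 * (2 * x - 1 - L * x) - μ * (1 + L * (x - 1)) + L ≤ 0 := by
  have hden : 0 < 1 - (x - 1) * μ := by linarith
  have hsplit : x * μ ^ 2 / (1 - (x - 1) * μ) + (1 - x * μ ^ 2 / (1 - (x - 1) * μ)) * L =
      (x * μ ^ 2 + (1 - (x - 1) * μ - x * μ ^ 2) * L) / (1 - (x - 1) * μ) := by
    field_simp
  rw [hsplit, div_le_iff₀ hden, ← sub_nonpos]
  ring_nf

end OrderedField

theorem sq_mul_sqrt_one_sub_div_sq {p q : ℝ} (hp : p ≠ 0) (hq : q ≤ p ^ 2) :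
    (p * √(1 - q / p ^ 2)) ^ 2 = p ^ 2 - q := by
  have hratio : q / p ^ 2 ≤ 1 := div_le_one_of_le₀ hq (sq_nonneg p)
  rw [mul_pow, sq_sqrt (sub_nonneg.2 hratio)]
  field_simp

/-- The coherence interval for parameters `L` and `x`, the latter a real number in place of the
integer `m`. Its endpoints are the roots of `μ²(2x - 1 - Lx) - μ(1 + L(x - 1)) + L`, with
`1 + L(x - 1)` taken out of the square root of the discriminant; they are meaningful only when
`4L(2x - 1 - Lx) ≤ (1 + L(x - 1))²`, as `√` is `0` on negative numbers. -/
def coherenceInterval (L x : ℝ) : Set ℝ :=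
  Set.Icc
    ((1 + L * (x - 1)) * (1 - √(1 - 4 * L * (2 * x - 1 - L * x) / (1 + L * (x - 1)) ^ 2)) /
      (2 * (2 * x - 1 - L * x)))
    ((1 + L * (x - 1)) * (1 + √(1 - 4 * L * (2 * x - 1 - L * x) / (1 + L * (x - 1)) ^ 2)) /
      (2 * (2 * x - 1 - L * x)))

section CoherenceInterval

variable {L x : ℝ}

theorem four_mul_le_sq_of_le_div (hL : 0 < L) (hxL : x ≤ (3 - L - √(8 - 8 * L)) / L) :
    4 * L * (2 * x - 1 - L * x) ≤ (1 + L * (x - 1)) ^ 2 := by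
  have hsqrt : √(8 - 8 * L) ≤ 3 - L - x * L := le_sub_comm.1 ((le_div_iff₀ hL).1 hxL)
  have hsq : 8 - 8 * L ≤ (3 - L - x * L) ^ 2 := (sqrt_le_iff.1 hsqrt).2
  linear_combination hsq

theorem coherenceInterval_nonempty (hA : 0 ≤ 2 * x - 1 - L * x) (hB : 0 ≤ 1 + L * (x - 1)) :
    (coherenceInterval L x).Nonempty := by
  refine Set.nonempty_Icc.2 (div_le_div_of_nonneg_right
    (mul_le_mul_of_nonneg_left ?_ hB) (mul_nonneg zero_le_two hA))
  linarith [sqrt_nonneg (1 - 4 * L * (2 * x - 1 - L * x) / (1 + L * (x - 1)) ^ 2)]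

theorem mem_coherenceInterval_iff (hA : 0 < 2 * x - 1 - L * x) (hB : 0 < 1 + L * (x - 1))
    (hdisc : 4 * L * (2 * x - 1 - L * x) ≤ (1 + L * (x - 1)) ^ 2) {μ : ℝ} :
    μ ∈ coherenceInterval L x ↔
      μ ^ 2 * (2 * x - 1 - L * x) - μ * (1 + L * (x - 1)) + L ≤ 0 := by
  rw [coherenceInterval]
  set A := 2 * x - 1 - L * x
  set B := 1 + L * (x - 1)
  have hdiscrim : discrim A (-B) L = (B * √(1 - 4 * L * A / B ^ 2)) ^ 2 := by
    rw [sq_mul_sqrt_one_sub_div_sq hB.ne' hdisc, discrim]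
    ring
  have hroots := quadratic_nonpos_iff_mem_Icc hA (by positivity) hdiscrim μ
  rw [neg_neg, ← mul_one_sub, ← mul_one_add] at hroots
  rw [← hroots]
  ring_nf

end CoherenceInterval

theorem coherence_interval_nonempty_and_quadratic_general {L x : ℝ} (hL0 : 0 < L) (hL1 : L ≤ 1)
    (hA : 0 < 2 * x - 1 - L * x) (hxL : x ≤ (3 - L - √(8 - 8 * L)) / L) :
    4 * L * (2 * x - 1 - L * x) ≤ (1 + L * (x - 1)) ^ 2 ∧
    (coherenceInterval L x).Nonempty ∧
    ∀ μ ∈ coherenceInterval L x, μ * (x - 1) < 1 →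
      (x * μ ^ 2 / (1 - (x - 1) * μ) + (1 - x * μ ^ 2 / (1 - (x - 1) * μ)) * L ≤ μ ∧
        μ ^ 2 * (2 * x - 1 - L * x) - μ * (1 + L * (x - 1)) + L ≤ 0) := by
  have hx : 0 < x := by
    have : 0 < x * (2 - L) := by linarith
    exact pos_of_mul_pos_left this (by linarith)
  have hB : 0 < 1 + L * (x - 1) := by linarith [mul_pos hL0 hx]
  have hdisc := four_mul_le_sq_of_le_div hL0 hxL
  refine ⟨hdisc, coherenceInterval_nonempty hA.le hB.le, fun μ hmem hμ => ?_⟩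
  have hquad := (mem_coherenceInterval_iff hA hB hdisc).1 hmem
  exact ⟨(div_add_one_sub_div_mul_le_iff hμ).2 hquad, hquad⟩

/-- Lemma (the coherence interval is well defined, nonempty, and its elements satisfy
the key quadratic inequality): for `0 < L < 1` and an integer `m ≥ 1` with
`m ≤ (3 - L - √(8-8L))/L`, one has `4L(2m-1-Lm) ≤ (1+L(m-1))²` (so the interval
bounds are real and the interval is nonempty), and every `μ` in the interval with
`0 < μ` and `μ(m-1) < 1` satisfies
`mμ²/(1-(m-1)μ) + (1 - mμ²/(1-(m-1)μ))·L ≤ μ`, equivalently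
`μ²(2m-1-Lm) - μ(1+L(m-1)) + L ≤ 0`. -/
theorem coherence_interval_nonempty_and_quadratic
    (L : ℝ) (hL0 : 0 < L) (hL1 : L < 1) (m : ℕ) (hm : 1 ≤ m)
    (hmL : (m : ℝ) ≤ (3 - L - Real.sqrt (8 - 8 * L)) / L) :
    4 * L * (2 * (m : ℝ) - 1 - L * m) ≤ (1 + L * ((m : ℝ) - 1)) ^ 2 ∧
    (1 + L * ((m : ℝ) - 1)) *
        (1 - Real.sqrt (1 - 4 * L * (2 * (m : ℝ) - 1 - L * m) /
          (1 + L * ((m : ℝ) - 1)) ^ 2)) / (2 * (2 * (m : ℝ) - 1 - L * m)) ≤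
      (1 + L * ((m : ℝ) - 1)) *
        (1 + Real.sqrt (1 - 4 * L * (2 * (m : ℝ) - 1 - L * m) /
          (1 + L * ((m : ℝ) - 1)) ^ 2)) / (2 * (2 * (m : ℝ) - 1 - L * m)) ∧
    ∀ μ : ℝ, 0 < μ → μ * ((m : ℝ) - 1) < 1 →
      (1 + L * ((m : ℝ) - 1)) *
          (1 - Real.sqrt (1 - 4 * L * (2 * (m : ℝ) - 1 - L * m) /
            (1 + L * ((m : ℝ) - 1)) ^ 2)) / (2 * (2 * (m : ℝ) - 1 - L * m)) ≤ μ →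
      μ ≤ (1 + L * ((m : ℝ) - 1)) *
          (1 + Real.sqrt (1 - 4 * L * (2 * (m : ℝ) - 1 - L * m) /
            (1 + L * ((m : ℝ) - 1)) ^ 2)) / (2 * (2 * (m : ℝ) - 1 - L * m)) →
      ((m : ℝ) * μ ^ 2 / (1 - ((m : ℝ) - 1) * μ) +
          (1 - (m : ℝ) * μ ^ 2 / (1 - ((m : ℝ) - 1) * μ)) * L ≤ μ ∧
        μ ^ 2 * (2 * (m : ℝ) - 1 - L * m) - μ * (1 + L * ((m : ℝ) - 1)) + L ≤ 0) := by
  have hA : 0 < 2 * (m : ℝ) - 1 - L * m := by nlinarith [Nat.one_le_cast (α := ℝ).2 hm]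
  obtain ⟨hdisc, hne, hquad⟩ := coherence_interval_nonempty_and_quadratic_general hL0 hL1.le hA hmL
  exact ⟨hdisc, Set.nonempty_Icc.1 hne, fun μ _ hμ hl hu => hquad μ ⟨hl, hu⟩ hμ⟩
end
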